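/- arXiv:1305.6492 — 2 statements merged into one kernel-verified Lean document; each statement's English description precedes it below -/
import Mathlib

section
/- Let (A,⋆) be a ⋆-ring, l ∈ A^× a unit with l⋆ = l⁻¹, and ζ ∈ A a ⋆_l-self-dual element (ζ⋆·l = ζ) such that multiplication by ζ induces isomorphisms h⁺(A,⋆) → h⁺(A,⋆_l) and h⁻(A,⋆) → h⁻(A,⋆_l). Let λ₁,…,λ_k, μ₁,…,μ_m ∈ A with μ_j⋆ = μ_j for all j, such that the sequence λ₁, λ₁⋆, λ₂, λ₂⋆, …, λ_k, λ_k⋆, μ₁, …, μ_m is a regular sequence on A, and let 𝔞 ⊆ A be the ideal generated by these elements. Then 𝔞 is stable under ⋆ and under ⋆_l, both involutions descend to the quotient ring A/𝔞, and multiplication by the class of ζ induces isomorphisms h⁺(A/𝔞, ⋆) → h⁺(A/𝔞, ⋆_l) and h⁻(A/𝔞, ⋆) → h⁻(A/𝔞, ⋆_l). -/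
def kerP {M : Type*} [AddCommGroup M] (f : M →+ M) : AddSubgroup M :=
  (AddMonoidHom.id M - f).ker

def kerM {M : Type*} [AddCommGroup M] (f : M →+ M) : AddSubgroup M :=
  (AddMonoidHom.id M + f).ker

def imP {M : Type*} [AddCommGroup M] (f : M →+ M) : AddSubgroup M :=
  (AddMonoidHom.id M + f).range

def imM {M : Type*} [AddCommGroup M] (f : M →+ M) : AddSubgroup M :=
  (AddMonoidHom.id M - f).range

abbrev hPlus {M : Type*} [AddCommGroup M] (f : M →+ M) :=
  kerP f ⧸ (imP f).addSubgroupOf (kerP f)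

abbrev hMinus {M : Type*} [AddCommGroup M] (f : M →+ M) :=
  kerM f ⧸ (imM f).addSubgroupOf (kerM f)

def hPlusMk {M : Type*} [AddCommGroup M] (f : M →+ M) (x : M) (hx : x ∈ kerP f) :
    hPlus f := QuotientAddGroup.mk ⟨x, hx⟩

def hMinusMk {M : Type*} [AddCommGroup M] (f : M →+ M) (x : M) (hx : x ∈ kerM f) :
    hMinus f := QuotientAddGroup.mk ⟨x, hx⟩

/-- The `l`-twisted involution `a ↦ a⋆ · l` on a `⋆`-ring `A`. -/
def twistL {A : Type*} [CommRing A] (σ : A →+* A) (l : A) : A →+ A :=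
  (AddMonoidHom.mulRight l).comp σ.toAddMonoidHom


def TI {M N : Type*} [AddCommGroup M] [AddCommGroup N] (s : M →+ M) (t : N →+ N)
    (f : M →+ N) : Prop :=
  (∀ x, s x = x → ∀ b, f x = b + t b → ∃ c, x = c + s c) ∧
  (∀ y, t y = y → ∃ x b, s x = x ∧ y = f x + (b + t b))

theorem five {M₁ M₂ M₃ N₁ N₂ N₃ : Type*} [AddCommGroup M₁] [AddCommGroup M₂] [AddCommGroup M₃]
    [AddCommGroup N₁] [AddCommGroup N₂] [AddCommGroup N₃]
    (s₁ : M₁ →+ M₁) (s₂ : M₂ →+ M₂) (s₃ : M₃ →+ M₃)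
    (t₁ : N₁ →+ N₁) (t₂ : N₂ →+ N₂) (t₃ : N₃ →+ N₃)
    (f₁ : M₁ →+ N₁) (f₂ : M₂ →+ N₂) (f₃ : M₃ →+ N₃)
    (i : M₁ →+ M₂) (p : M₂ →+ M₃) (j : N₁ →+ N₂) (q : N₂ →+ N₃)
    (hi : Function.Injective i) (hj : Function.Injective j)
    (hp : Function.Surjective p) (hq : Function.Surjective q)
    (hip : ∀ x, p x = 0 ↔ ∃ u, i u = x) (hjq : ∀ x, q x = 0 ↔ ∃ u, j u = x)
    (his : ∀ u, i (s₁ u) = s₂ (i u)) (hps : ∀ u, p (s₂ u) = s₃ (p u))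
    (hjt : ∀ u, j (t₁ u) = t₂ (j u)) (hqt : ∀ u, q (t₂ u) = t₃ (q u))
    (hji : ∀ u, j (f₁ u) = f₂ (i u)) (hqp : ∀ u, q (f₂ u) = f₃ (p u))
    (hss : ∀ u, s₂ (s₂ u) = u) (htt : ∀ u, t₂ (t₂ u) = u)
    (hf : ∀ u, f₂ (s₂ u) = t₂ (f₂ u))
    (h1 : TI s₁ t₁ f₁) (h1' : TI (-s₁) (-t₁) f₁)
    (h2 : TI s₂ t₂ f₂) (h2' : TI (-s₂) (-t₂) f₂) : TI s₃ t₃ f₃ := by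
  simp only [TI, AddMonoidHom.neg_apply] at h1 h1' h2 h2' ⊢
  have qj : ∀ u, q (j u) = 0 := fun u => (hjq _).2 ⟨u, rfl⟩
  have pi : ∀ u, p (i u) = 0 := fun u => (hip _).2 ⟨u, rfl⟩
  constructor
  · intro x3 hx3 b3 hb3
    obtain ⟨x, rfl⟩ := hp x3
    obtain ⟨b, rfl⟩ := hq b3
    obtain ⟨u, hu⟩ := (hip (x - s₂ x)).1 (by rw [map_sub, hps, hx3, sub_self])
    obtain ⟨w, hw⟩ := (hjq (f₂ x - (b + t₂ b))).1 (by
      rw [map_sub, map_add, hqt, hqp, hb3, sub_self])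
    have hu' : - s₁ u = u := by
      apply hi; rw [map_neg, his, hu, map_sub, hss]; abel
    have hfu : f₁ u = w + - t₁ w := by
      apply hj
      rw [hji, hu, map_add, map_neg, hjt, hw]
      simp only [map_sub, map_add, hf, htt]; abel
    obtain ⟨c, hc⟩ := h1'.1 u hu' w hfu
    have hx1 : s₂ (x - i c) = x - i c := by
      have := congrArg i hc
      rw [hu, map_add, map_neg, his] at this
      rw [map_sub, ← sub_eq_zero]
      rw [← sub_eq_zero] at this
      rw [← neg_eq_zero, ← this]; abel
    have hw1 : t₁ (w - f₁ c) = w - f₁ c := by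
      apply hj
      have e : j (w - f₁ c) = f₂ (x - i c) - (b + t₂ b) := by
        rw [map_sub, hw, hji, map_sub]; abel
      rw [hjt, e, map_sub, ← hf, hx1, map_add, htt, add_comm (t₂ b)]
    obtain ⟨d, e, hd, he⟩ := h1.2 _ hw1
    have hx2 : s₂ (x - i c - i d) = x - i c - i d := by
      rw [map_sub, hx1, ← his, hd]
    have hfx2 : f₂ (x - i c - i d) = (b + j e) + t₂ (b + j e) := by
      have := congrArg j he
      rw [map_sub, hw, hji, map_add, map_add, hji, hjt] at this
      rw [map_sub, map_sub, map_add]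
      rw [← sub_eq_zero] at this ⊢
      rw [← this]; abel
    obtain ⟨c2, hc2⟩ := h2.1 _ hx2 _ hfx2
    refine ⟨p c2, ?_⟩
    have := congrArg p hc2
    rw [map_sub, map_sub, pi, pi, map_add, hps] at this
    simpa using this
  · intro y3 hy3
    obtain ⟨y, rfl⟩ := hq y3
    obtain ⟨v, hv⟩ := (hjq (y - t₂ y)).1 (by rw [map_sub, hqt, hy3, sub_self])
    have hv' : - t₁ v = v := by
      apply hj; rw [map_neg, hjt, hv, map_sub, htt]; abel
    obtain ⟨u, b, hu, hb⟩ := h1'.2 v hv'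
    have h3 : f₂ (i u) = (y - j b) + - t₂ (y - j b) := by
      have := congrArg j hb
      rw [hv, map_add, map_add, map_neg, hjt, hji] at this
      rw [map_sub]
      rw [← sub_eq_zero] at this ⊢
      rw [← neg_eq_zero, ← this]; abel
    have h4 : - s₂ (i u) = i u := by rw [← his, ← map_neg, hu]
    obtain ⟨c, hc⟩ := h2'.1 _ h4 _ h3
    have h5 : t₂ (y - j b - f₂ c) = y - j b - f₂ c := by
      have := congrArg f₂ hc
      rw [h3, map_add, map_neg, hf] at this
      rw [map_sub]
      rw [← sub_eq_zero] at this ⊢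
      rw [← neg_eq_zero, ← this]; abel
    obtain ⟨x, b', hx, hb'⟩ := h2.2 _ h5
    refine ⟨p (c + x), q b', ?_, ?_⟩
    · have := congrArg p hc
      rw [pi, map_add, map_neg, hps] at this
      rw [map_add, map_add, ← hps x, hx]
      rw [← sub_eq_zero] at this ⊢
      rw [← this]; abel
    · have := congrArg q hb'
      rw [map_sub, map_sub, qj, hqp, map_add, hqp, map_add, hqt] at this
      rw [map_add, map_add]
      rw [← sub_eq_zero] at this ⊢
      rw [← this]; abel

theorem TI_triv {M N : Type*} [AddCommGroup M] [AddCommGroup N] (s : M →+ M) (t : N →+ N)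
    (f : M →+ N) (h1 : ∀ x, s x = x → ∃ c, x = c + s c) (h2 : ∀ x, t x = x → ∃ c, x = c + t c) :
    TI s t f :=
  ⟨fun x hx _ _ => h1 x hx, fun y hy => by
    obtain ⟨c, hc⟩ := h2 y hy
    exact ⟨0, c, by simp, by simpa using hc⟩⟩

theorem twistL_apply {A : Type*} [CommRing A] (σ : A →+* A) (l a : A) :
    twistL σ l a = σ a * l := rfl

theorem twistL_neg {A : Type*} [CommRing A] (σ : A →+* A) (l : A) :
    -twistL σ l = twistL σ (-l) := by
  ext a; simp [twistL_apply]

def Good {B : Type*} [CommRing B] (σ : B →+* B) (l ζ : B) : Prop :=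
  ∀ ε : B, (ε = 1 ∨ ε = -1) → TI (twistL σ ε) (twistL σ (ε * l)) (AddMonoidHom.mulLeft ζ)

def rst {B : Type*} [CommRing B] (K : Ideal B) (g : B →+ B) (h : ∀ x ∈ K, g x ∈ K) : K →+ K where
  toFun x := ⟨g x, h x x.2⟩
  map_zero' := by ext; simp
  map_add' x y := by ext; simp

theorem neg_eps {B : Type*} [CommRing B] {ε : B} (h : ε = 1 ∨ ε = -1) : -ε = 1 ∨ -ε = -1 := by
  rcases h with rfl | rfl <;> simp

theorem muStep {B C : Type*} [CommRing B] [CommRing C] (σ : B →+* B) (τ : C →+* C)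
    (hσ : ∀ a, σ (σ a) = a) (p : B →+* C) (hp : Function.Surjective p)
    (hpσ : ∀ a, p (σ a) = τ (p a)) (l ζ : B) (hl : σ l * l = 1) (hζ : σ ζ * l = ζ)
    (μ : B) (hμ : σ μ = μ) (hreg : ∀ a, μ * a = 0 → a = 0)
    (hker : ∀ x, p x = 0 ↔ ∃ u, μ * u = x) (hG : Good σ l ζ) : Good τ (p l) (p ζ) := by
  intro ε hε
  obtain ⟨δ, hδ, rfl⟩ : ∃ δ : B, (δ = 1 ∨ δ = -1) ∧ p δ = ε := by
    rcases hε with rfl | rfl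
    · exact ⟨1, by simp⟩
    · exact ⟨-1, by simp⟩
  have hδσ : σ δ = δ := by rcases hδ with rfl | rfl <;> simp
  have hδδ : δ * δ = 1 := by rcases hδ with rfl | rfl <;> simp
  have hinj : Function.Injective (AddMonoidHom.mulLeft μ) := by
    rw [injective_iff_map_eq_zero]; exact hreg
  have g1 := hG δ hδ
  have g2 := hG (-δ) (neg_eps hδ)
  rw [neg_mul, ← twistL_neg, ← twistL_neg] at g2
  refine five (twistL σ δ) (twistL σ δ) _ (twistL σ (δ * l)) (twistL σ (δ * l)) _
    (AddMonoidHom.mulLeft ζ) (AddMonoidHom.mulLeft ζ) _ (AddMonoidHom.mulLeft μ)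
    p.toAddMonoidHom (AddMonoidHom.mulLeft μ) p.toAddMonoidHom hinj hinj hp hp hker hker
    ?_ ?_ ?_ ?_ ?_ ?_ ?_ ?_ ?_ g1 g2 g1 g2
  all_goals intro u
  all_goals simp [twistL_apply, hpσ, hμ, hσ, hδσ]
  all_goals grind

theorem kerStep {B C : Type*} [CommRing B] [CommRing C] (σ : B →+* B) (τ : C →+* C)
    (hσ : ∀ a, σ (σ a) = a) (p : B →+* C) (hp : Function.Surjective p)
    (hpσ : ∀ a, p (σ a) = τ (p a)) (l ζ : B) (hl : σ l * l = 1) (hζ : σ ζ * l = ζ)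
    (lam : B) (hreg : ∀ a b, lam * a + σ lam * b = 0 → lam * a = 0)
    (hker : ∀ x, p x = 0 ↔ ∃ a b, lam * a + σ lam * b = x)
    (hG : Good σ l ζ) : Good τ (p l) (p ζ) := by
  intro ε hε
  obtain ⟨δ, hδ, rfl⟩ : ∃ δ : B, (δ = 1 ∨ δ = -1) ∧ p δ = ε := by
    rcases hε with rfl | rfl
    · exact ⟨1, by simp⟩
    · exact ⟨-1, by simp⟩
  have hδσ : σ δ = δ := by rcases hδ with rfl | rfl <;> simp
  have hδδ : δ * δ = 1 := by rcases hδ with rfl | rfl <;> simp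
  have g1 := hG δ hδ
  have g2 := hG (-δ) (neg_eps hδ)
  rw [neg_mul, ← twistL_neg, ← twistL_neg] at g2
  have hK : ∀ m : B, ∀ x ∈ RingHom.ker p, twistL σ m x ∈ RingHom.ker p := by
    intro m x hx
    rw [RingHom.mem_ker] at hx ⊢
    simp [twistL_apply, hpσ, hx]
  have hM : ∀ x ∈ RingHom.ker p, AddMonoidHom.mulLeft ζ x ∈ RingHom.ker p := by
    intro x hx
    exact Ideal.mul_mem_left _ _ hx
  have key : ∀ m : B, ∀ x, rst _ _ (hK m) x = x → ∃ c, x = c + rst _ _ (hK m) c := by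
    rintro m ⟨x, hx⟩ h
    obtain ⟨a, b, rfl⟩ := (hker x).1 hx
    have h' : σ (lam * a + σ lam * b) * m = lam * a + σ lam * b := congrArg Subtype.val h
    refine ⟨⟨lam * a, (hker _).2 ⟨a, 0, by simp⟩⟩, ?_⟩
    ext
    change lam * a + σ lam * b = lam * a + σ (lam * a) * m
    simp only [map_add, map_mul, hσ] at h' ⊢
    have := hreg (a - σ b * m) (b - σ a * m) (by linear_combination -h')
    linear_combination -h' - this
  have key' : ∀ m : B, ∀ x, (-rst _ _ (hK m)) x = x → ∃ c, x = c + (-rst _ _ (hK m)) c := by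
    intro m
    have : -rst _ _ (hK m) = rst _ _ (hK (-m)) := by
      ext x
      change - (σ x * m) = σ x * (-m)
      ring
    rw [this]; exact key _
  have hinj : Function.Injective (RingHom.ker p).toAddSubgroup.subtype := Subtype.val_injective
  have hex : ∀ x, p.toAddMonoidHom x = 0 ↔ ∃ u, (RingHom.ker p).toAddSubgroup.subtype u = x := by
    intro x
    exact ⟨fun h => ⟨⟨x, h⟩, rfl⟩, by rintro ⟨u, rfl⟩; exact u.2⟩
  refine five (rst _ _ (hK δ)) (twistL σ δ) _ (rst _ _ (hK (δ * l))) (twistL σ (δ * l)) _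
    (rst _ _ hM) (AddMonoidHom.mulLeft ζ) _ (RingHom.ker p).toAddSubgroup.subtype
    p.toAddMonoidHom (RingHom.ker p).toAddSubgroup.subtype p.toAddMonoidHom hinj hinj hp hp hex hex
    (fun _ => rfl) ?_ (fun _ => rfl) ?_ (fun _ => rfl) ?_ ?_ ?_ ?_
    (TI_triv _ _ _ (key _) (key _)) (TI_triv _ _ _ (key' _) (key' _)) g1 g2
  all_goals intro u
  all_goals simp [twistL_apply, hpσ, hσ, hδσ]
  all_goals grind

def GoodI {A : Type*} [CommRing A] (σ : A →+* A) (l ζ : A) (I : Ideal A) : Prop :=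
  ∃ h : I ≤ I.comap σ, Good (Ideal.quotientMap I σ h) (Ideal.Quotient.mk I l)
    (Ideal.Quotient.mk I ζ)

section
variable {A : Type*} [CommRing A] (σ : A →+* A)
    (hσ : ∀ a, σ (σ a) = a) (l ζ : A) (hl : σ l * l = 1) (hζ : σ ζ * l = ζ)

theorem qinv (hσ : ∀ a, σ (σ a) = a) (I : Ideal A) (h : I ≤ I.comap σ) (a : A ⧸ I) :
    Ideal.quotientMap I σ h (Ideal.quotientMap I σ h a) = a := by
  obtain ⟨a, rfl⟩ := Ideal.Quotient.mk_surjective a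
  simp [hσ]

theorem goodI_bot (hσ : ∀ a, σ (σ a) = a) (hl : σ l * l = 1) (hζ : σ ζ * l = ζ)
    (hG : Good σ l ζ) : GoodI σ l ζ ⊥ := by
  refine ⟨bot_le, ?_⟩
  refine kerStep σ _ hσ (Ideal.Quotient.mk ⊥) Ideal.Quotient.mk_surjective ?_ l ζ hl hζ 0 ?_ ?_ hG
  · simp
  · simp
  · intro x
    rw [Ideal.Quotient.eq_zero_iff_mem]
    simp [eq_comm]

theorem goodI_mu (hσ : ∀ a, σ (σ a) = a) (hl : σ l * l = 1) (hζ : σ ζ * l = ζ)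
    (I : Ideal A) (hG : GoodI σ l ζ I) (μ : A) (hμ : σ μ = μ)
    (hreg : ∀ a, μ * a ∈ I → a ∈ I) : GoodI σ l ζ (I ⊔ Ideal.span {μ}) := by
  obtain ⟨h, hG⟩ := hG
  have h' : I ⊔ Ideal.span {μ} ≤ (I ⊔ Ideal.span {μ}).comap σ := by
    refine sup_le (h.trans (Ideal.comap_mono le_sup_left)) ?_
    rw [Ideal.span_singleton_le_iff_mem, Ideal.mem_comap, hμ]
    exact Ideal.mem_sup_right (Ideal.mem_span_singleton_self μ)
  refine ⟨h', ?_⟩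
  refine muStep (Ideal.quotientMap I σ h) (Ideal.quotientMap _ σ h') (qinv σ hσ I h)
    (Ideal.Quotient.factor le_sup_left) (Ideal.Quotient.factor_surjective le_sup_left) ?_
    (Ideal.Quotient.mk I l) (Ideal.Quotient.mk I ζ) ?_ ?_ (Ideal.Quotient.mk I μ) ?_ ?_ ?_ hG
  · intro a
    obtain ⟨a, rfl⟩ := Ideal.Quotient.mk_surjective a
    simp
  · simp only [Ideal.quotientMap_mk, ← map_mul, hl, map_one]
  · simp only [Ideal.quotientMap_mk, ← map_mul, hζ]
  · simp only [Ideal.quotientMap_mk, hμ]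
  · intro a
    obtain ⟨a, rfl⟩ := Ideal.Quotient.mk_surjective a
    rw [← map_mul, Ideal.Quotient.eq_zero_iff_mem, Ideal.Quotient.eq_zero_iff_mem]
    exact hreg a
  · intro x
    obtain ⟨x, rfl⟩ := Ideal.Quotient.mk_surjective x
    rw [Ideal.Quotient.factor_mk, Ideal.Quotient.eq_zero_iff_mem]
    constructor
    · intro hx
      obtain ⟨y, hy, z, hz, rfl⟩ := Submodule.mem_sup.1 hx
      obtain ⟨u, rfl⟩ := Ideal.mem_span_singleton'.1 hz
      refine ⟨Ideal.Quotient.mk I u, ?_⟩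
      rw [map_add, Ideal.Quotient.eq_zero_iff_mem.2 hy, map_mul]; ring
    · rintro ⟨u, hu⟩
      obtain ⟨u, rfl⟩ := Ideal.Quotient.mk_surjective u
      rw [← map_mul, eq_comm, Ideal.Quotient.eq] at hu
      have : x = (x - μ * u) + μ * u := by ring
      rw [this]
      exact Ideal.add_mem _ (Ideal.mem_sup_left hu) (Ideal.mem_sup_right
        (Ideal.mul_mem_right _ _ (Ideal.mem_span_singleton_self μ)))

theorem goodI_lam (hσ : ∀ a, σ (σ a) = a) (hl : σ l * l = 1) (hζ : σ ζ * l = ζ)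
    (I : Ideal A) (hG : GoodI σ l ζ I) (lam : A)
    (hreg : ∀ a, lam * a ∈ I → a ∈ I)
    (hreg' : ∀ a, σ lam * a ∈ I ⊔ Ideal.span {lam} → a ∈ I ⊔ Ideal.span {lam}) :
    GoodI σ l ζ (I ⊔ Ideal.span {lam} ⊔ Ideal.span {σ lam}) := by
  have hst : ∀ a ∈ I, σ a ∈ I := fun a ha => hG.1 ha
  have hreg2 : ∀ a, σ lam * a ∈ I → a ∈ I := by
    intro a ha
    have := hst _ ha
    rw [map_mul, hσ] at this
    have := hst _ (hreg _ this)
    rwa [hσ] at this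
  obtain ⟨h, hG⟩ := goodI_mu σ l ζ hσ hl hζ I hG (lam * σ lam) (by rw [map_mul, hσ, mul_comm])
    (fun a ha => hreg2 _ (hreg _ (by rwa [← mul_assoc])))
  set I' := I ⊔ Ideal.span {lam * σ lam} with hI'
  set J := I ⊔ Ideal.span {lam} ⊔ Ideal.span {σ lam} with hJ
  have hlJ : lam ∈ J :=
    Ideal.mem_sup_left (Ideal.mem_sup_right (Ideal.mem_span_singleton_self _))
  have hlJ' : σ lam ∈ J := Ideal.mem_sup_right (Ideal.mem_span_singleton_self _)
  have hIJ : I ≤ J := le_sup_left.trans le_sup_left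
  have h' : J ≤ J.comap σ := by
    refine sup_le (sup_le (fun a ha => hIJ (hst a ha)) ?_) ?_
    · rw [Ideal.span_singleton_le_iff_mem]; exact hlJ'
    · rw [Ideal.span_singleton_le_iff_mem, Ideal.mem_comap, hσ]; exact hlJ
  have hIJ' : I' ≤ J := by
    refine sup_le hIJ ?_
    rw [Ideal.span_singleton_le_iff_mem]; exact Ideal.mul_mem_right _ _ hlJ
  refine ⟨h', ?_⟩
  refine kerStep (Ideal.quotientMap I' σ h) (Ideal.quotientMap _ σ h') (qinv σ hσ I' h)
    (Ideal.Quotient.factor hIJ') (Ideal.Quotient.factor_surjective hIJ') ?_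
    (Ideal.Quotient.mk I' l) (Ideal.Quotient.mk I' ζ) ?_ ?_ (Ideal.Quotient.mk I' lam) ?_ ?_ hG
  · intro a
    obtain ⟨a, rfl⟩ := Ideal.Quotient.mk_surjective a
    simp
  · simp only [Ideal.quotientMap_mk, ← map_mul, hl, map_one]
  · simp only [Ideal.quotientMap_mk, ← map_mul, hζ]
  · intro a b
    obtain ⟨a, rfl⟩ := Ideal.Quotient.mk_surjective a
    obtain ⟨b, rfl⟩ := Ideal.Quotient.mk_surjective b
    rw [Ideal.quotientMap_mk, ← map_mul, ← map_mul, ← map_add, Ideal.Quotient.eq_zero_iff_mem,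
      Ideal.Quotient.eq_zero_iff_mem]
    intro hab
    have hll : lam ∈ I ⊔ Ideal.span {lam} := Ideal.mem_sup_right (Ideal.mem_span_singleton_self _)
    have h1 : I' ≤ I ⊔ Ideal.span {lam} := by
      refine sup_le le_sup_left ?_
      rw [Ideal.span_singleton_le_iff_mem]; exact Ideal.mul_mem_right _ _ hll
    have h2 : σ lam * b ∈ I ⊔ Ideal.span {lam} := by
      have := Ideal.sub_mem _ (h1 hab) (Ideal.mul_mem_right a _ hll)
      rwa [add_sub_cancel_left] at this
    obtain ⟨y, hy, z, hz, hyz⟩ := Submodule.mem_sup.1 (hreg' _ h2)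
    obtain ⟨u, rfl⟩ := Ideal.mem_span_singleton'.1 hz
    have h3 : σ lam * b ∈ I' := by
      rw [← hyz, mul_add]
      refine Ideal.add_mem _ (Ideal.mem_sup_left (Ideal.mul_mem_left _ _ hy))
        (Ideal.mem_sup_right (Ideal.mem_span_singleton'.2 ⟨u, by ring⟩))
    have := Ideal.sub_mem _ hab h3
    rwa [add_sub_cancel_right] at this
  · intro x
    obtain ⟨x, rfl⟩ := Ideal.Quotient.mk_surjective x
    rw [Ideal.Quotient.factor_mk, Ideal.Quotient.eq_zero_iff_mem]
    constructor
    · intro hx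
      obtain ⟨y, hy, z, hz, rfl⟩ := Submodule.mem_sup.1 hx
      obtain ⟨u, rfl⟩ := Ideal.mem_span_singleton'.1 hz
      obtain ⟨y', hy', z', hz', rfl⟩ := Submodule.mem_sup.1 hy
      obtain ⟨v, rfl⟩ := Ideal.mem_span_singleton'.1 hz'
      refine ⟨Ideal.Quotient.mk I' v, Ideal.Quotient.mk I' u, ?_⟩
      have : Ideal.Quotient.mk I' y' = 0 := Ideal.Quotient.eq_zero_iff_mem.2 (Ideal.mem_sup_left hy')
      rw [map_add, map_add, this, map_mul, map_mul, Ideal.quotientMap_mk]; ring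
    · rintro ⟨u, v, hu⟩
      obtain ⟨u, rfl⟩ := Ideal.Quotient.mk_surjective u
      obtain ⟨v, rfl⟩ := Ideal.Quotient.mk_surjective v
      rw [Ideal.quotientMap_mk, ← map_mul, ← map_mul, ← map_add, eq_comm, Ideal.Quotient.eq] at hu
      have : x = (x - (lam * u + σ lam * v)) + (lam * u + σ lam * v) := by ring
      rw [this]
      exact Ideal.add_mem _ (hIJ' hu) (Ideal.add_mem _ (Ideal.mul_mem_right _ _ hlJ)
        (Ideal.mul_mem_right _ _ hlJ'))

theorem span_snoc (P : List A) (x : A) :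
    (Ideal.span {y | y ∈ P ++ [x]} : Ideal A) = Ideal.span {y | y ∈ P} ⊔ Ideal.span {x} := by
  rw [← Ideal.span_union]
  congr 1
  ext y
  simp [or_comm]

theorem goodI_lams (hσ : ∀ a, σ (σ a) = a) (hl : σ l * l = 1) (hζ : σ ζ * l = ζ)
    (ps R : List A) : ∀ (P : List A), GoodI σ l ζ (Ideal.span {x | x ∈ P}) →
    (∀ P' x Q, P ++ (ps.map fun x => [x, σ x]).flatten ++ R = P' ++ x :: Q → ∀ a,
      x * a ∈ (Ideal.span {x | x ∈ P'} : Ideal A) → a ∈ (Ideal.span {x | x ∈ P'} : Ideal A)) →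
    GoodI σ l ζ (Ideal.span {x | x ∈ P ++ (ps.map fun x => [x, σ x]).flatten}) := by
  induction ps with
  | nil => intro P hP _; simpa using hP
  | cons y ps ih =>
    intro P hP hreg
    have h1 := hreg P y (σ y :: (ps.map fun x => [x, σ x]).flatten ++ R) (by simp)
    have h2 := hreg (P ++ [y]) (σ y) ((ps.map fun x => [x, σ x]).flatten ++ R) (by simp)
    rw [span_snoc] at h2
    have h3 := goodI_lam σ l ζ hσ hl hζ _ hP y h1 h2
    rw [← span_snoc, ← span_snoc] at h3
    have := ih _ h3 (by
      intro P' x Q he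
      exact hreg P' x Q (by rw [← he]; simp))
    simpa using this

theorem goodI_mus (hσ : ∀ a, σ (σ a) = a) (hl : σ l * l = 1) (hζ : σ ζ * l = ζ)
    (ps : List A) : ∀ (P : List A), GoodI σ l ζ (Ideal.span {x | x ∈ P}) →
    (∀ x ∈ ps, σ x = x) →
    (∀ P' x Q, P ++ ps = P' ++ x :: Q → ∀ a,
      x * a ∈ (Ideal.span {x | x ∈ P'} : Ideal A) → a ∈ (Ideal.span {x | x ∈ P'} : Ideal A)) →
    GoodI σ l ζ (Ideal.span {x | x ∈ P ++ ps}) := by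
  induction ps with
  | nil => intro P hP _ _; simpa using hP
  | cons y ps ih =>
    intro P hP hs hreg
    have h1 := hreg P y ps rfl
    have h3 := goodI_mu σ l ζ hσ hl hζ _ hP y (hs y (by simp)) h1
    rw [← span_snoc] at h3
    have := ih _ h3 (fun x hx => hs x (by simp [hx])) (by
      intro P' x Q he
      exact hreg P' x Q (by rw [← he]; simp))
    simpa using this
end

theorem bridge {M N : Type*} [AddCommGroup M] [AddCommGroup N] (K R : AddSubgroup M)
    (K' R' : AddSubgroup N) (f : M →+ N) (hK : ∀ x ∈ K, f x ∈ K') (hR : ∀ x ∈ R, f x ∈ R') :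
    (∃ e : (K ⧸ R.addSubgroupOf K) ≃+ (K' ⧸ R'.addSubgroupOf K'),
      ∀ (a : M) (ha : a ∈ K) (hb : f a ∈ K'),
        e (QuotientAddGroup.mk ⟨a, ha⟩) = QuotientAddGroup.mk ⟨f a, hb⟩) ↔
    ((∀ x ∈ K, f x ∈ R' → x ∈ R) ∧ (∀ y ∈ K', ∃ x ∈ K, y - f x ∈ R')) := by
  constructor
  · rintro ⟨e, he⟩
    constructor
    · intro x hx hfx
      have h1 := he x hx (hK x hx)
      rw [(QuotientAddGroup.eq_zero_iff _).2 (show (⟨f x, hK x hx⟩ : K') ∈ R'.addSubgroupOf K' from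
        AddSubgroup.mem_addSubgroupOf.2 hfx)] at h1
      have h2 := (AddEquiv.map_eq_zero_iff e).1 h1
      exact AddSubgroup.mem_addSubgroupOf.1 ((QuotientAddGroup.eq_zero_iff _).1 h2)
    · intro y hy
      obtain ⟨z, hz⟩ := e.surjective (QuotientAddGroup.mk ⟨y, hy⟩)
      obtain ⟨⟨x, hx⟩, rfl⟩ := QuotientAddGroup.mk_surjective z
      rw [he x hx (hK x hx), QuotientAddGroup.eq] at hz
      have := AddSubgroup.mem_addSubgroupOf.1 hz
      refine ⟨x, hx, ?_⟩
      have h2 : -f x + y ∈ R' := this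
      rwa [neg_add_eq_sub] at h2
  · rintro ⟨h1, h2⟩
    let g : K →+ K' := (f.comp K.subtype).codRestrict K' (fun x => hK x x.2)
    let G : (K ⧸ R.addSubgroupOf K) →+ (K' ⧸ R'.addSubgroupOf K') :=
      QuotientAddGroup.map _ _ g (by
        intro x hx
        exact AddSubgroup.mem_addSubgroupOf.2 (hR _ (AddSubgroup.mem_addSubgroupOf.1 hx)))
    have hG : Function.Bijective G := by
      constructor
      · rw [injective_iff_map_eq_zero]
        intro z
        obtain ⟨⟨x, hx⟩, rfl⟩ := QuotientAddGroup.mk_surjective z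
        intro h
        have h3 : ((g ⟨x, hx⟩ : K') : K' ⧸ R'.addSubgroupOf K') = 0 := h
        have h4 : f x ∈ R' := AddSubgroup.mem_addSubgroupOf.1 ((QuotientAddGroup.eq_zero_iff _).1 h3)
        exact (QuotientAddGroup.eq_zero_iff _).2 (AddSubgroup.mem_addSubgroupOf.2 (h1 x hx h4))
      · intro z
        obtain ⟨⟨y, hy⟩, rfl⟩ := QuotientAddGroup.mk_surjective z
        obtain ⟨x, hx, hxy⟩ := h2 y hy
        refine ⟨QuotientAddGroup.mk ⟨x, hx⟩, ?_⟩
        refine QuotientAddGroup.eq.2 (AddSubgroup.mem_addSubgroupOf.2 ?_)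
        change -f x + y ∈ R'
        rwa [neg_add_eq_sub]
    exact ⟨AddEquiv.ofBijective G hG, fun a ha hb => rfl⟩

theorem bridgeP {M N : Type*} [AddCommGroup M] [AddCommGroup N] (s : M →+ M) (t : N →+ N)
    (f : M →+ N) (hf : ∀ x, f (s x) = t (f x)) :
    (∃ e : hPlus s ≃+ hPlus t, ∀ (a : M) (ha : a ∈ kerP s) (hb : f a ∈ kerP t),
        e (hPlusMk s a ha) = hPlusMk t (f a) hb) ↔ TI s t f := by
  refine (bridge (kerP s) (imP s) (kerP t) (imP t) f ?_ ?_).trans ?_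
  · intro x hx
    simp only [kerP, AddMonoidHom.mem_ker, AddMonoidHom.sub_apply, AddMonoidHom.id_apply] at hx ⊢
    rw [← hf, ← map_sub, hx, map_zero]
  · rintro _ ⟨x, rfl⟩
    exact ⟨f x, by simp [hf]⟩
  · simp only [kerP, imP, TI, AddMonoidHom.mem_ker, AddMonoidHom.mem_range, AddMonoidHom.sub_apply,
      AddMonoidHom.add_apply, AddMonoidHom.id_apply, sub_eq_zero]
    constructor
    · rintro ⟨h1, h2⟩
      refine ⟨fun x hx b hb => ?_, fun y hy => ?_⟩
      · obtain ⟨c, hc⟩ := h1 x hx.symm ⟨b, hb.symm⟩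
        exact ⟨c, hc.symm⟩
      · obtain ⟨x, hx, b, hb⟩ := h2 y hy.symm
        exact ⟨x, b, hx.symm, by rw [hb]; abel⟩
    · rintro ⟨h1, h2⟩
      refine ⟨fun x hx ⟨b, hb⟩ => ?_, fun y hy => ?_⟩
      · obtain ⟨c, hc⟩ := h1 x hx.symm b hb.symm
        exact ⟨c, hc.symm⟩
      · obtain ⟨x, b, hx, hb⟩ := h2 y hy.symm
        exact ⟨x, hx.symm, b, by rw [hb]; abel⟩

theorem bridgeM {M N : Type*} [AddCommGroup M] [AddCommGroup N] (s : M →+ M) (t : N →+ N)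
    (f : M →+ N) (hf : ∀ x, f (s x) = t (f x)) :
    (∃ e : hMinus s ≃+ hMinus t, ∀ (a : M) (ha : a ∈ kerM s) (hb : f a ∈ kerM t),
        e (hMinusMk s a ha) = hMinusMk t (f a) hb) ↔ TI (-s) (-t) f := by
  have h1 := bridge (kerM s) (imM s) (kerM t) (imM t) f (by
    intro x hx
    simp only [kerM, AddMonoidHom.mem_ker, AddMonoidHom.add_apply, AddMonoidHom.id_apply] at hx ⊢
    rw [← hf, ← map_add, hx, map_zero]) (by
    rintro _ ⟨x, rfl⟩
    exact ⟨f x, by simp [hf]⟩)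
  have h2 := bridgeP (-s) (-t) f (by simp [hf])
  have h3 := bridge (kerP (-s)) (imP (-s)) (kerP (-t)) (imP (-t)) f (by
    intro x hx
    simp only [kerP, AddMonoidHom.mem_ker, sub_neg_eq_add, AddMonoidHom.add_apply,
      AddMonoidHom.id_apply] at hx ⊢
    rw [← hf, ← map_add, hx, map_zero]) (by
    rintro _ ⟨x, rfl⟩
    exact ⟨f x, by simp [hf]⟩)
  refine h1.trans (Iff.trans ?_ (h3.symm.trans h2))
  simp only [kerP, kerM, imP, imM, sub_neg_eq_add, ← sub_eq_add_neg]

theorem statement15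
    {A : Type*} [CommRing A] (σ : A →+* A) (hσ : ∀ a, σ (σ a) = a)
    (l : Aˣ) (hl : σ l = ((l⁻¹ : Aˣ) : A))
    (ζ : A) (hζ : σ ζ * l = ζ)
    (hisoP : ∃ e : hPlus σ.toAddMonoidHom ≃+ hPlus (twistL σ (l : A)),
      ∀ (a : A) (ha : a ∈ kerP σ.toAddMonoidHom) (hb : ζ * a ∈ kerP (twistL σ (l : A))),
        e (hPlusMk σ.toAddMonoidHom a ha) = hPlusMk (twistL σ (l : A)) (ζ * a) hb)
    (hisoM : ∃ e : hMinus σ.toAddMonoidHom ≃+ hMinus (twistL σ (l : A)),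
      ∀ (a : A) (ha : a ∈ kerM σ.toAddMonoidHom) (hb : ζ * a ∈ kerM (twistL σ (l : A))),
        e (hMinusMk σ.toAddMonoidHom a ha) = hMinusMk (twistL σ (l : A)) (ζ * a) hb)
    {k m : ℕ} (lam : Fin k → A) (mu : Fin m → A) (hmu : ∀ j, σ (mu j) = mu j)
    (L : List A)
    (hL : L = (List.ofFn fun i : Fin k => [lam i, σ (lam i)]).flatten ++ List.ofFn mu)
    -- `L` is a regular sequence on `A`: each entry is a non-zero-divisor modulo
    -- the ideal generated by the previous ones
    (hreg : ∀ (n : ℕ) (hn : n < L.length) (a : A),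
      L.get ⟨n, hn⟩ * a ∈ (Ideal.span {x | x ∈ L.take n} : Ideal A) →
        a ∈ (Ideal.span {x | x ∈ L.take n} : Ideal A)) :
    (∀ a ∈ (Ideal.span {x | x ∈ L} : Ideal A), σ a ∈ (Ideal.span {x | x ∈ L} : Ideal A)) ∧
    (∀ a ∈ (Ideal.span {x | x ∈ L} : Ideal A),
        σ a * l ∈ (Ideal.span {x | x ∈ L} : Ideal A)) ∧
    ∀ (σq τq : (A ⧸ (Ideal.span {x | x ∈ L} : Ideal A)) →+
        (A ⧸ (Ideal.span {x | x ∈ L} : Ideal A))),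
      (∀ a : A, σq (Ideal.Quotient.mk _ a) = Ideal.Quotient.mk _ (σ a)) →
      (∀ a : A, τq (Ideal.Quotient.mk _ a) = Ideal.Quotient.mk _ (σ a * l)) →
      (∃ e : hPlus σq ≃+ hPlus τq,
        ∀ (a : A ⧸ (Ideal.span {x | x ∈ L} : Ideal A)) (ha : a ∈ kerP σq)
          (hb : (Ideal.Quotient.mk _ ζ) * a ∈ kerP τq),
          e (hPlusMk σq a ha) = hPlusMk τq ((Ideal.Quotient.mk _ ζ) * a) hb) ∧
      (∃ e : hMinus σq ≃+ hMinus τq,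
        ∀ (a : A ⧸ (Ideal.span {x | x ∈ L} : Ideal A)) (ha : a ∈ kerM σq)
          (hb : (Ideal.Quotient.mk _ ζ) * a ∈ kerM τq),
          e (hMinusMk σq a ha) = hMinusMk τq ((Ideal.Quotient.mk _ ζ) * a) hb) := by
  have hll : σ l * l = 1 := by rw [hl]; simp
  have eqv : ∀ x, AddMonoidHom.mulLeft ζ (σ.toAddMonoidHom x) =
      twistL σ (l : A) (AddMonoidHom.mulLeft ζ x) := by
    intro x
    change ζ * σ x = σ (ζ * x) * l
    rw [map_mul]
    linear_combination (-σ x) * hζ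
  have hP := (bridgeP σ.toAddMonoidHom (twistL σ (l : A)) (AddMonoidHom.mulLeft ζ) eqv).1 hisoP
  have hM := (bridgeM σ.toAddMonoidHom (twistL σ (l : A)) (AddMonoidHom.mulLeft ζ) eqv).1 hisoM
  have t1 : σ.toAddMonoidHom = twistL σ 1 := by ext; simp [twistL_apply]
  have hG : Good σ (l : A) ζ := by
    rintro ε (rfl | rfl)
    · rw [one_mul, ← t1]; exact hP
    · rw [neg_one_mul, ← twistL_neg, ← twistL_neg, ← t1]; exact hM
  have hreg' : ∀ P' x Q, L = P' ++ x :: Q → ∀ a,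
      x * a ∈ (Ideal.span {x | x ∈ P'} : Ideal A) →
        a ∈ (Ideal.span {x | x ∈ P'} : Ideal A) := by
    intro P' x Q he a ha
    have := hreg P'.length (by rw [he]; simp) a
    simp only [he, List.get_eq_getElem, List.take_left, List.getElem_append_right le_rfl,
      Nat.sub_self, List.getElem_cons_zero] at this
    exact this ha
  have hL' : L = [] ++ ((List.ofFn lam).map fun x => [x, σ x]).flatten ++ List.ofFn mu := by
    rw [hL, List.map_ofFn]; rfl
  have g0 : GoodI σ (l : A) ζ (Ideal.span {x | x ∈ ([] : List A)}) := by
    have : (Ideal.span {x | x ∈ ([] : List A)}) = ⊥ := by simp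
    rw [this]
    exact goodI_bot σ l ζ hσ hll hζ hG
  have g1 := goodI_lams σ l ζ hσ hll hζ (List.ofFn lam) (List.ofFn mu) [] g0
    (by rw [← hL']; exact hreg')
  have g2 := goodI_mus σ l ζ hσ hll hζ (List.ofFn mu) _ g1
    (by
      intro x hx
      obtain ⟨j, rfl⟩ := (List.mem_ofFn' _ _).1 hx
      exact hmu j) (by rw [← hL']; exact hreg')
  rw [← hL'] at g2
  obtain ⟨hst, hGq⟩ := g2
  refine ⟨fun a ha => hst ha, fun a ha => Ideal.mul_mem_right _ _ (hst ha), ?_⟩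
  intro σq τq hσq hτq
  have e1 : σq = twistL (Ideal.quotientMap _ σ hst) 1 := by
    ext a
    obtain ⟨a, rfl⟩ := Ideal.Quotient.mk_surjective a
    rw [hσq, twistL_apply, mul_one, Ideal.quotientMap_mk]
  have e2 : τq = twistL (Ideal.quotientMap _ σ hst) (Ideal.Quotient.mk _ (l : A)) := by
    ext a
    obtain ⟨a, rfl⟩ := Ideal.Quotient.mk_surjective a
    rw [hτq, twistL_apply, map_mul, Ideal.quotientMap_mk]
  have eqv' : ∀ x, AddMonoidHom.mulLeft (Ideal.Quotient.mk _ ζ) (σq x) =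
      τq (AddMonoidHom.mulLeft (Ideal.Quotient.mk _ ζ) x) := by
    intro x
    obtain ⟨x, rfl⟩ := Ideal.Quotient.mk_surjective x
    change _ * σq _ = τq (_ * _)
    rw [hσq, ← map_mul, ← map_mul, hτq]
    exact congrArg _ (eqv x)
  constructor
  · refine (bridgeP σq τq (AddMonoidHom.mulLeft (Ideal.Quotient.mk _ ζ)) eqv').2 ?_
    have := hGq 1 (Or.inl rfl)
    rw [one_mul] at this
    rw [e1, e2]; exact this
  · refine (bridgeM σq τq (AddMonoidHom.mulLeft (Ideal.Quotient.mk _ ζ)) eqv').2 ?_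
    have := hGq (-1) (Or.inr rfl)
    rw [neg_one_mul, ← twistL_neg, ← twistL_neg] at this
    rw [e1, e2]; exact this
end

section
/- Let X be a free abelian group and W a finite group acting on X by group automorphisms; let ℤ[X] be the group ring of X over ℤ, with standard basis e^ξ (ξ ∈ X), carrying the induced W-action, and let ℤ[X]^W be the subring of W-invariants. For δ ∈ X put S(δ) := Σ_{ξ ∈ W·δ} e^ξ (sum over the orbit of δ). Suppose given: elements ξ₁,…,ξ_l ∈ X, each fixed by W; elements ω₁,…,ω_r ∈ X; a subset F ⊆ X meeting every W-orbit in exactly one point, such that every element of F can be written uniquely in the form Σᵢ aᵢξᵢ + Σⱼ bⱼωⱼ with aᵢ ∈ ℤ and bⱼ ∈ ℕ, and conversely every element of this form belongs to F; and a partial order ≼ on F such that (i) for every δ ∈ F the set {ε ∈ F : ε ≺ δ} is finite, and (ii) for all δ, δ' ∈ F the product S(δ)·S(δ') equals S(δ+δ') plus a ℤ-linear combination of elements S(ε) with ε ∈ F and ε ≺ δ+δ'. Then the ring homomorphism Φ from ℤ[x₁^{±1},…,x_l^{±1}] ⊗ ℤ[w₁,…,w_r] (a Laurent polynomial ring tensored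 with a polynomial ring over ℤ) to ℤ[X]^W determined by Φ(xᵢ) = e^{ξᵢ} and Φ(wⱼ) = S(ωⱼ) is a ring isomorphism onto ℤ[X]^W. -/
/-- The orbit sum `S(δ) = Σ_{ξ ∈ W·δ} e^ξ` in the group ring `ℤ[X]`. -/
noncomputable def orbitSum (W : Type*) {X : Type*} [AddCommGroup X] [DecidableEq X]
    [Group W] [Fintype W] [DistribMulAction W X] (δ : X) : AddMonoidAlgebra ℤ X :=
  ∑ γ ∈ Finset.image (fun w : W => w • δ) Finset.univ, AddMonoidAlgebra.single γ 1

/-- The ring action of `w ∈ W` on the group ring `ℤ[X]`, induced by the action on `X`. -/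
noncomputable def actRing (W : Type*) {X : Type*} [AddCommGroup X]
    [Group W] [DistribMulAction W X] (w : W) :
    AddMonoidAlgebra ℤ X →+* AddMonoidAlgebra ℤ X :=
  AddMonoidAlgebra.mapDomainRingHom ℤ (DistribMulAction.toAddMonoidHom X w)

/-- The invariant subring `ℤ[X]^W`. -/
noncomputable def invSubring (W : Type*) (X : Type*) [AddCommGroup X]
    [Group W] [DistribMulAction W X] : Subring (AddMonoidAlgebra ℤ X) where
  carrier := {p | ∀ w : W, actRing W w p = p}
  mul_mem' := fun ha hb w => by rw [map_mul, ha w, hb w]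
  one_mem' := fun w => map_one _
  add_mem' := fun ha hb w => by rw [map_add, ha w, hb w]
  zero_mem' := fun w => map_zero _
  neg_mem' := fun ha w => by rw [map_neg, ha w]

theorem aux_exists_form (X W : Type*) [AddCommGroup X] [Module.Free ℤ X]
    [Group W] [Fintype W] [DistribMulAction W X] :
    ∃ B : X →ₗ[ℤ] X →ₗ[ℤ] ℤ, (∀ x y, B x y = B y x) ∧
      (∀ (w : W) x y, B (w • x) (w • y) = B x y) ∧ (∀ x, x ≠ 0 → 0 < B x x) := by
  classical
  let b := Module.Free.chooseBasis ℤ X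
  have hs : ∀ x y, b.toDual x y = b.toDual y x := by
    intro x y
    have : b.toDual = b.toDual.flip := by
      refine b.ext fun i => b.ext fun j => ?_
      rw [LinearMap.flip_apply, b.toDual_apply, b.toDual_apply]
      simp only [eq_comm]
    conv_lhs => rw [this]
    rfl
  have hsq : ∀ x, b.toDual x x = ∑ i ∈ (b.repr x).support, (b.repr x i) ^ 2 := by
    intro x
    conv_lhs => enter [2]; rw [← b.linearCombination_repr x]
    rw [Finsupp.linearCombination_apply, Finsupp.sum, map_sum]
    refine Finset.sum_congr rfl fun i _ => ?_
    rw [map_smul, b.toDual_apply_left, smul_eq_mul, sq]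
  have hnn : ∀ x, 0 ≤ b.toDual x x := fun x => by
    rw [hsq]; positivity
  have hpos : ∀ x, x ≠ 0 → 0 < b.toDual x x := by
    intro x hx
    rw [hsq]
    have hne : (b.repr x).support.Nonempty := by
      rw [Finsupp.support_nonempty_iff]
      simpa using hx
    refine Finset.sum_pos (fun i hi => ?_) hne
    have := Finsupp.mem_support_iff.1 hi
    positivity
  let A : W → X →ₗ[ℤ] X := fun w => (DistribMulAction.toAddMonoidHom X w).toIntLinearMap
  have hA : ∀ w x, A w x = w • x := fun _ _ => rfl
  refine ⟨∑ w, b.toDual.compl₁₂ (A w) (A w), ?_, ?_, ?_⟩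
  · intro x y
    simp only [LinearMap.sum_apply, LinearMap.compl₁₂_apply, hA]
    exact Finset.sum_congr rfl fun w _ => hs _ _
  · intro w x y
    simp only [LinearMap.sum_apply, LinearMap.compl₁₂_apply, hA, ← mul_smul]
    exact Fintype.sum_equiv (Equiv.mulRight w) _ _ (fun _ => rfl)
  · intro x hx
    simp only [LinearMap.sum_apply, LinearMap.compl₁₂_apply, hA]
    refine Finset.sum_pos (fun w _ => hpos _ ?_) ⟨1, Finset.mem_univ _⟩
    exact (smul_ne_zero_iff_ne w).2 hx

theorem aux_cancel {X : Type*} [AddCommGroup X] [Module.Free ℤ X] {n : ℤ} (hn : n ≠ 0)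
    {x y : X} (h : n • x = n • y) : x = y :=
  smul_right_injective X hn h

theorem aux_L {X W : Type*} [AddCommGroup X] [Module.Free ℤ X]
    [Group W] [Fintype W] [DistribMulAction W X] {l r : ℕ}
    (wt : ((Fin l → ℤ) × (Fin r → ℤ)) →ₗ[ℤ] X) (hinj : Function.Injective wt)
    (F : Set X) (hF : ∀ δ, δ ∈ F ↔ ∃ p, (∀ j, 0 ≤ p.2 j) ∧ wt p = δ)
    (huniq : ∀ δ ∈ F, ∀ w : W, w • δ ∈ F → w • δ = δ)
    (hcov : ∀ x, ∃ w : W, w • x ∈ F) (z : X) (hz : z ∈ F) (y : X) :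
    ∃ (w : W) (n : ℕ), w • z = z ∧ (n : ℤ) • z + w • y ∈ F := by
  choose f hf using fun n : ℕ => hcov ((n : ℤ) • z + y)
  obtain ⟨w, hw⟩ := Finite.exists_infinite_fiber f
  have hinf : (f ⁻¹' {w}).Infinite := Set.infinite_coe_iff.1 hw
  have hS : ∀ n ∈ f ⁻¹' {w}, (n : ℤ) • (w • z) + w • y ∈ F := by
    intro n hn
    have h := hf n
    rw [show f n = w from hn, smul_add, smul_comm] at h
    exact h
  obtain ⟨n₀, hn₀⟩ := hinf.nonempty
  obtain ⟨n₁, hn₁, hlt⟩ := hinf.exists_gt n₀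
  obtain ⟨p₀, hp₀, e₀⟩ := (hF _).1 (hS _ hn₀)
  obtain ⟨p₁, hp₁, e₁⟩ := (hF _).1 (hS _ hn₁)
  have hd : wt (p₁ - p₀) = ((n₁ : ℤ) - n₀) • (w • z) := by
    rw [map_sub, e₀, e₁, sub_smul]; abel
  have hpos : (0 : ℤ) < (n₁ : ℤ) - n₀ := by omega
  have hdn : ∀ j, 0 ≤ (p₁ - p₀).2 j := by
    intro j
    by_contra hneg
    push Not at hneg
    obtain ⟨n, hn, hgt⟩ := hinf.exists_gt (n₀ + ((n₁ - n₀) * p₀.2 j).toNat)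
    obtain ⟨p, hp, e⟩ := (hF _).1 (hS _ hn)
    have key : ((n₁ : ℤ) - n₀) • p = ((n₁ : ℤ) - n₀) • p₀ + ((n : ℤ) - n₀) • (p₁ - p₀) := by
      apply hinj
      rw [map_add, map_smul, map_smul, map_smul, hd, e, e₀]
      generalize w • z = a
      generalize w • y = a'
      module
    have kj := congrFun (congrArg Prod.snd key) j
    simp only [Prod.smul_snd, Prod.snd_add, Pi.smul_apply, Pi.add_apply, smul_eq_mul] at kj
    have h1 := mul_nonneg hpos.le (hp j)
    have h2 : ((n₁ : ℤ) - n₀) * p₀.2 j < (n : ℤ) - n₀ := by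
      have := Int.self_le_toNat (((n₁ : ℤ) - n₀) * p₀.2 j)
      have h3 : ((n₀ + (((n₁ : ℤ) - n₀) * p₀.2 j).toNat : ℕ) : ℤ) < n := by exact_mod_cast hgt
      push_cast at h3
      linarith
    have h0 := mul_nonneg hpos.le (hp₀ j)
    nlinarith
  have hm : w • (((n₁ : ℤ) - n₀) • z) ∈ F := by
    rw [smul_comm]
    exact (hF _).2 ⟨_, hdn, hd⟩
  have hm' : ((n₁ : ℤ) - n₀) • z ∈ F := by
    obtain ⟨q, hq, e⟩ := (hF _).1 hz
    exact (hF _).2 ⟨((n₁ : ℤ) - n₀) • q, fun j => by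
      simpa using mul_nonneg hpos.le (hq j), by rw [map_smul, e]⟩
  have hfix : w • z = z := by
    have := huniq _ hm' w hm
    rw [smul_comm] at this
    exact aux_cancel hpos.ne' this
  refine ⟨w, n₀, hfix, ?_⟩
  have := hS _ hn₀
  rwa [hfix] at this

theorem aux_max {X W : Type*} [AddCommGroup X] [Module.Free ℤ X]
    [Group W] [Fintype W] [DistribMulAction W X] {l r : ℕ}
    (wt : ((Fin l → ℤ) × (Fin r → ℤ)) →ₗ[ℤ] X) (hinj : Function.Injective wt)
    (F : Set X) (hF : ∀ δ, δ ∈ F ↔ ∃ p, (∀ j, 0 ≤ p.2 j) ∧ wt p = δ)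
    (huniq : ∀ δ ∈ F, ∀ w : W, w • δ ∈ F → w • δ = δ)
    (hcov : ∀ x, ∃ w : W, w • x ∈ F)
    (B : X →ₗ[ℤ] X →ₗ[ℤ] ℤ) (hsymm : ∀ x y, B x y = B y x)
    (hinv : ∀ (w : W) x y, B (w • x) (w • y) = B x y) (hpd : ∀ x, x ≠ 0 → 0 < B x x)
    (x : X) (hx : x ∈ F) (y : X) (hy : y ∈ F) (u : W) : B x (u • y) ≤ B x y := by
  obtain ⟨v, hv⟩ := Finite.exists_max (fun u : W => B x (u • y))
  obtain ⟨w, n, hwx, hn⟩ := aux_L wt hinj F hF huniq hcov x hx (v • y)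
  rw [← mul_smul] at hn
  set t := w * v with ht
  have hmax : ∀ u : W, B x (u • y) ≤ B x (t • y) := by
    intro u
    refine (hv u).trans (le_of_eq ?_)
    rw [ht, mul_smul]
    conv_rhs => rw [← hwx]
    rw [hinv]
  suffices h : t • y ∈ F by
    have h2 := hmax u
    rwa [huniq y hy t h] at h2
  obtain ⟨c, hc, ec⟩ := (hF _).1 hx
  obtain ⟨q, hq, eq⟩ := (hF _).1 hn
  set b := q - (n : ℤ) • c with hb
  have eb : wt b = t • y := by rw [hb, map_sub, map_smul, ec, eq]; abel
  by_cases hall : ∀ j, 0 ≤ b.2 j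
  · exact (hF _).2 ⟨b, hall, eb⟩
  exfalso
  push Not at hall
  have hcpos : ∀ j, b.2 j < 0 → 0 < c.2 j := by
    intro j hj
    refine lt_of_le_of_ne (hc j) fun h0 => ?_
    have := hq j
    have h3 : b.2 j = q.2 j - n * c.2 j := by simp [hb]
    rw [← h0] at h3
    linarith
  obtain ⟨k, hk, hkmax⟩ := Finset.exists_max_image
    (Finset.univ.filter fun j => b.2 j < 0) (fun j => (-(b.2 j) : ℚ) / (c.2 j))
    (by obtain ⟨j, hj⟩ := hall; exact ⟨j, by simpa using hj⟩)
  have hbk : b.2 k < 0 := by simpa using hk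
  have hck := hcpos k hbk
  set z := (-(b.2 k)) • x + (c.2 k) • (t • y) with hzdef
  have hz : z ∈ F := by
    refine (hF _).2 ⟨(-(b.2 k)) • c + (c.2 k) • b, fun j => ?_, by
      rw [map_add, map_smul, map_smul, ec, eb]⟩
    simp only [Prod.smul_snd, Prod.snd_add, Pi.smul_apply, Pi.add_apply, smul_eq_mul]
    by_cases hj : b.2 j < 0
    · have h1 := hkmax j (by simpa using hj)
      have hcj := hcpos j hj
      rw [div_le_div_iff₀ (by exact_mod_cast hcj) (by exact_mod_cast hck)] at h1
      have h2 : -(b.2 j) * c.2 k ≤ -(b.2 k) * c.2 j := by exact_mod_cast h1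
      linarith
    · push Not at hj
      have := mul_nonneg hck.le hj
      have := mul_nonneg (neg_pos.2 hbk).le (hc j)
      linarith
  obtain ⟨s, m, hsz, hm⟩ := aux_L wt hinj F hF huniq hcov z hz (t • y)
  set Y := t • y with hY
  have hzY : B z (s • Y) = B z Y := by
    conv_lhs => rw [← hsz]
    rw [hinv]
  have h1 : B x (s • Y) ≤ B x Y := by
    rw [hY, ← mul_smul]; exact hmax _
  rw [hzdef] at hzY
  simp only [map_add, map_smul, LinearMap.add_apply, LinearMap.smul_apply, smul_eq_mul] at hzY
  have h2 : B Y Y ≤ B Y (s • Y) := by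
    have := mul_le_mul_of_nonneg_left h1 (neg_pos.2 hbk).le
    have h3 : c.2 k * B Y Y ≤ c.2 k * B Y (s • Y) := by linarith
    exact le_of_mul_le_mul_left h3 hck
  have hfix : s • Y = Y := by
    by_contra hne
    have := hpd (s • Y - Y) (sub_ne_zero.2 hne)
    simp only [map_sub, LinearMap.sub_apply, hinv] at this
    rw [hsymm (s • Y) Y] at this
    linarith
  rw [hfix] at hm
  obtain ⟨g, hg, eg⟩ := (hF _).1 hm
  have : g = (m : ℤ) • ((-(b.2 k)) • c + (c.2 k) • b) + b := by
    apply hinj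
    rw [eg, map_add, map_smul, map_add, map_smul, map_smul, ec, eb]
  have hgk := congrFun (congrArg Prod.snd this) k
  simp only [Prod.smul_snd, Prod.snd_add, Pi.smul_apply, Pi.add_apply, smul_eq_mul] at hgk
  have := hg k
  rw [hgk] at this
  nlinarith

section aux
variable {X W : Type*} [AddCommGroup X] [DecidableEq X]
    [Group W] [Fintype W] [DistribMulAction W X]

theorem aux_coeff_orbit (δ γ : X) :
    (orbitSum W δ).coeff γ = if ∃ w : W, w • δ = γ then 1 else 0 := by
  classical
  rw [orbitSum, AddMonoidAlgebra.coeff_sum, Finsupp.finsetSum_apply]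
  simp only [AddMonoidAlgebra.coeff_single, Finsupp.single_apply]
  rw [Finset.sum_ite_eq']
  simp

theorem aux_mem_inv (f : AddMonoidAlgebra ℤ X) :
    f ∈ invSubring W X ↔ ∀ (w : W) (x : X), f.coeff (w • x) = f.coeff x := by
  have key : ∀ (w : W) (x : X), (actRing W w f).coeff (w • x) = f.coeff x := fun w x =>
    Finsupp.mapDomain_apply (MulAction.injective w) f.coeff x
  constructor
  · intro h w x
    have := key w x
    rwa [h w] at this
  · intro h w
    ext x
    have h1 := key w (w⁻¹ • x)
    have h2 := h w (w⁻¹ • x)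
    rw [smul_inv_smul] at h1 h2
    rw [h1, h2]

theorem aux_orbit_inv (δ : X) : orbitSum W δ ∈ invSubring W X := by
  rw [aux_mem_inv]
  intro w x
  rw [aux_coeff_orbit, aux_coeff_orbit]
  congr 1
  apply propext
  constructor
  · rintro ⟨v, hv⟩
    exact ⟨w⁻¹ * v, by rw [mul_smul, hv, inv_smul_smul]⟩
  · rintro ⟨v, hv⟩
    exact ⟨w * v, by rw [mul_smul, hv]⟩

theorem aux_coeff_F {F : Set X} (huniq : ∀ δ ∈ F, ∀ w : W, w • δ ∈ F → w • δ = δ)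
    {δ γ : X} (hδ : δ ∈ F) (hγ : γ ∈ F) :
    (orbitSum W δ).coeff γ = if δ = γ then 1 else 0 := by
  rw [aux_coeff_orbit]
  congr 1
  apply propext
  constructor
  · rintro ⟨w, rfl⟩
    exact (huniq _ hδ w hγ).symm
  · rintro rfl
    exact ⟨1, one_smul _ _⟩

theorem aux_span {F : Set X} (huniq : ∀ δ ∈ F, ∀ w : W, w • δ ∈ F → w • δ = δ)
    (hcov : ∀ x, ∃ w : W, w • x ∈ F) (f : AddMonoidAlgebra ℤ X) (hf : f ∈ invSubring W X) :
    f ∈ Submodule.span ℤ (orbitSum W '' {ε | ε ∈ F ∧ f.coeff ε ≠ 0}) := by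
  classical
  have : f = ∑ ε ∈ f.coeff.support.filter (· ∈ F), f.coeff ε • orbitSum W ε := by
    rw [← sub_eq_zero]
    set g := f - ∑ ε ∈ f.coeff.support.filter (· ∈ F), f.coeff ε • orbitSum W ε with hg
    have hgi : g ∈ invSubring W X :=
      sub_mem hf (sum_mem fun ε _ => zsmul_mem (aux_orbit_inv ε) _)
    rw [aux_mem_inv] at hgi
    have hgF : ∀ x ∈ F, g.coeff x = 0 := by
      intro x hx
      rw [hg, AddMonoidAlgebra.coeff_sub, AddMonoidAlgebra.coeff_sum, Finsupp.sub_apply,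
        Finsupp.finsetSum_apply, sub_eq_zero]
      have : ∀ ε ∈ f.coeff.support.filter (· ∈ F),
          (f.coeff ε • orbitSum W ε).coeff x = if ε = x then f.coeff ε else 0 := by
        intro ε hε
        rw [AddMonoidAlgebra.coeff_smul_apply, aux_coeff_F huniq (Finset.mem_filter.1 hε).2 hx]
        simp
      rw [Finset.sum_congr rfl this, Finset.sum_ite_eq']
      simp only [Finset.mem_filter, Finsupp.mem_support_iff, hx, and_true]
      split_ifs with h
      · rfl
      · simpa using h
    ext x
    obtain ⟨w, hw⟩ := hcov x
    rw [← hgi w, hgF _ hw]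
    rfl
  have hmem : ∑ ε ∈ f.coeff.support.filter (· ∈ F), f.coeff ε • orbitSum W ε ∈
      Submodule.span ℤ (orbitSum W '' {ε | ε ∈ F ∧ f.coeff ε ≠ 0}) := by
    refine Submodule.sum_mem _ fun ε hε =>
      Submodule.smul_mem _ _ (Submodule.subset_span ⟨ε, ?_, rfl⟩)
    have := Finset.mem_filter.1 hε
    exact ⟨this.2, Finsupp.mem_support_iff.1 this.1⟩
  rw [← this] at hmem
  exact hmem

theorem aux_coeff_mul {δ δ' γ : X} (h : (orbitSum W δ * orbitSum W δ').coeff γ ≠ 0) :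
    ∃ u v : W, γ = u • δ + v • δ' := by
  have h1 := AddMonoidAlgebra.support_coeff_mul_subset _ _ (Finsupp.mem_support_iff.2 h)
  obtain ⟨a, ha, b, hb, rfl⟩ := Finset.mem_add.1 h1
  rw [Finsupp.mem_support_iff, aux_coeff_orbit] at ha hb
  simp only [ne_eq, ite_eq_right_iff, one_ne_zero, imp_false, not_not] at ha hb
  obtain ⟨u, rfl⟩ := ha
  obtain ⟨v, rfl⟩ := hb
  exact ⟨u, v, rfl⟩

/-- dominance -/
def auxDom (B : X →ₗ[ℤ] X →ₗ[ℤ] ℤ) (F : Set X) (ε δ : X) : Prop :=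
  ∀ x ∈ F, B ε x ≤ B δ x

/-- span of strictly lower orbit sums -/
noncomputable def auxLow (W : Type*) [Group W] [Fintype W] [DistribMulAction W X]
    (B : X →ₗ[ℤ] X →ₗ[ℤ] ℤ) (F : Set X) (δ : X) :
    Submodule ℤ (AddMonoidAlgebra ℤ X) :=
  Submodule.span ℤ (orbitSum W '' {ε | ε ∈ F ∧ auxDom B F ε δ ∧ ε ≠ δ})

theorem aux_dom_lt {B : X →ₗ[ℤ] X →ₗ[ℤ] ℤ} (hsymm : ∀ x y, B x y = B y x)
    (hpd : ∀ x, x ≠ 0 → 0 < B x x) {F : Set X} {ε δ : X} (hε : ε ∈ F) (hδ : δ ∈ F)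
    (h : auxDom B F ε δ) (hne : ε ≠ δ) : B ε ε < B δ δ := by
  have h1 := h ε hε
  have h2 := h δ hδ
  have h3 := hpd (ε - δ) (sub_ne_zero.2 hne)
  simp only [map_sub, LinearMap.sub_apply] at h3
  have := hsymm ε δ
  linarith

theorem aux_dom_antisymm {B : X →ₗ[ℤ] X →ₗ[ℤ] ℤ} (hsymm : ∀ x y, B x y = B y x)
    (hpd : ∀ x, x ≠ 0 → 0 < B x x) {F : Set X} {ε δ : X} (hε : ε ∈ F) (hδ : δ ∈ F)
    (h : auxDom B F ε δ) (h' : auxDom B F δ ε) : ε = δ := by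
  by_contra hne
  have h1 := aux_dom_lt hsymm hpd hε hδ h hne
  have h2 := aux_dom_lt hsymm hpd hδ hε h' (Ne.symm hne)
  linarith

theorem aux_low_mono {B : X →ₗ[ℤ] X →ₗ[ℤ] ℤ} (hsymm : ∀ x y, B x y = B y x)
    (hpd : ∀ x, x ≠ 0 → 0 < B x x) {F : Set X} {ε δ : X} (hε : ε ∈ F) (hδ : δ ∈ F)
    (h : auxDom B F ε δ) : auxLow W B F ε ≤ auxLow W B F δ := by
  apply Submodule.span_mono
  apply Set.image_mono
  rintro η ⟨hη, hd, hne⟩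
  refine ⟨hη, fun x hx => (hd x hx).trans (h x hx), ?_⟩
  rintro rfl
  exact hne (aux_dom_antisymm hsymm hpd hη hε hd h)

/-- The main multiplicativity step: leading terms multiply. -/
theorem aux_lead_mul {B : X →ₗ[ℤ] X →ₗ[ℤ] ℤ} (hsymm : ∀ x y, B x y = B y x)
    (hpd : ∀ x, x ≠ 0 → 0 < B x x) {F : Set X} (hadd : ∀ a ∈ F, ∀ b ∈ F, a + b ∈ F)
    (hS : ∀ a ∈ F, ∀ b ∈ F,
      orbitSum W a * orbitSum W b - orbitSum W (a + b) ∈ auxLow W B F (a + b))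
    {δ δ' : X} (hδ : δ ∈ F) (hδ' : δ' ∈ F) {f g : AddMonoidAlgebra ℤ X}
    (hf : f - orbitSum W δ ∈ auxLow W B F δ) (hg : g - orbitSum W δ' ∈ auxLow W B F δ') :
    f * g - orbitSum W (δ + δ') ∈ auxLow W B F (δ + δ') := by
  have base : ∀ ε ∈ F, ∀ ε' ∈ F, auxDom B F ε δ → auxDom B F ε' δ' → (ε ≠ δ ∨ ε' ≠ δ') →
      orbitSum W ε * orbitSum W ε' ∈ auxLow W B F (δ + δ') := by
    intro ε hε ε' hε' hd hd' hne
    have hdom : auxDom B F (ε + ε') (δ + δ') := fun x hx => by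
      have := hd x hx
      have := hd' x hx
      simp only [map_add, LinearMap.add_apply]
      linarith
    have h1 := aux_low_mono (W := W) hsymm hpd (hadd _ hε _ hε') (hadd _ hδ _ hδ') hdom
      (hS ε hε ε' hε')
    have h2 : orbitSum W (ε + ε') ∈ auxLow W B F (δ + δ') := by
      refine Submodule.subset_span ⟨_, ⟨hadd _ hε _ hε', hdom, fun heq => ?_⟩, rfl⟩
      have e1 : auxDom B F δ ε := fun x hx => by
        have := hd' x hx
        have h3 := congrArg (fun t => B t x) heq
        simp only [map_add, LinearMap.add_apply] at h3
        linarith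
      have e2 : auxDom B F δ' ε' := fun x hx => by
        have := hd x hx
        have h3 := congrArg (fun t => B t x) heq
        simp only [map_add, LinearMap.add_apply] at h3
        linarith
      rcases hne with h | h
      · exact h (aux_dom_antisymm hsymm hpd hε hδ hd e1)
      · exact h (aux_dom_antisymm hsymm hpd hε' hδ' hd' e2)
    have := add_mem h1 h2
    rwa [sub_add_cancel] at this
  have m1 : ∀ a ∈ auxLow W B F δ, a * orbitSum W δ' ∈ auxLow W B F (δ + δ') := by
    intro a ha
    induction ha using Submodule.span_induction with
    | mem x hx =>
      obtain ⟨ε, ⟨h1, h2, h3⟩, rfl⟩ := hx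
      exact base _ h1 _ hδ' h2 (fun _ _ => le_rfl) (Or.inl h3)
    | zero => rw [zero_mul]; exact zero_mem _
    | add x y _ _ hx hy => rw [add_mul]; exact add_mem hx hy
    | smul c x _ hx => rw [smul_mul_assoc]; exact Submodule.smul_mem _ _ hx
  have m2 : ∀ b ∈ auxLow W B F δ', orbitSum W δ * b ∈ auxLow W B F (δ + δ') := by
    intro a ha
    induction ha using Submodule.span_induction with
    | mem x hx =>
      obtain ⟨ε, ⟨h1, h2, h3⟩, rfl⟩ := hx
      exact base _ hδ _ h1 (fun _ _ => le_rfl) h2 (Or.inr h3)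
    | zero => rw [mul_zero]; exact zero_mem _
    | add x y _ _ hx hy => rw [mul_add]; exact add_mem hx hy
    | smul c x _ hx => rw [mul_smul_comm]; exact Submodule.smul_mem _ _ hx
  have m3 : ∀ b ∈ auxLow W B F δ', ∀ a ∈ auxLow W B F δ, a * b ∈ auxLow W B F (δ + δ') := by
    intro b hb
    induction hb using Submodule.span_induction with
    | mem x hx =>
      obtain ⟨ε', ⟨h1, h2, h3⟩, rfl⟩ := hx
      intro a ha
      induction ha using Submodule.span_induction with
      | mem x hx =>
        obtain ⟨ε, ⟨k1, k2, k3⟩, rfl⟩ := hx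
        exact base _ k1 _ h1 k2 h2 (Or.inr h3)
      | zero => rw [zero_mul]; exact zero_mem _
      | add x y _ _ hx hy => rw [add_mul]; exact add_mem hx hy
      | smul c x _ hx => rw [smul_mul_assoc]; exact Submodule.smul_mem _ _ hx
    | zero => intro a _; rw [mul_zero]; exact zero_mem _
    | add x y _ _ hx hy => intro a ha; rw [mul_add]; exact add_mem (hx a ha) (hy a ha)
    | smul c x _ hx => intro a ha; rw [mul_smul_comm]; exact Submodule.smul_mem _ _ (hx a ha)
  have e : f * g - orbitSum W (δ + δ') =
      (f - orbitSum W δ) * (g - orbitSum W δ') + (f - orbitSum W δ) * orbitSum W δ'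
      + orbitSum W δ * (g - orbitSum W δ')
      + (orbitSum W δ * orbitSum W δ' - orbitSum W (δ + δ')) := by ring
  rw [e]
  exact add_mem (add_mem (add_mem (m3 _ hg _ hf) (m1 _ hf)) (m2 _ hg)) (hS _ hδ _ hδ')

theorem aux_low_coeff {B : X →ₗ[ℤ] X →ₗ[ℤ] ℤ} (hsymm : ∀ x y, B x y = B y x)
    (hpd : ∀ x, x ≠ 0 → 0 < B x x) {F : Set X}
    (huniq : ∀ δ ∈ F, ∀ w : W, w • δ ∈ F → w • δ = δ) {δ γ : X} (hδ : δ ∈ F) (hγ : γ ∈ F)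
    (h : B δ δ ≤ B γ γ) {f : AddMonoidAlgebra ℤ X} (hf : f ∈ auxLow W B F δ) :
    f.coeff γ = 0 := by
  induction hf using Submodule.span_induction with
  | mem x hx =>
    obtain ⟨ε, ⟨h1, h2, h3⟩, rfl⟩ := hx
    rw [aux_coeff_F huniq h1 hγ, if_neg]
    rintro rfl
    have := aux_dom_lt hsymm hpd h1 hδ h2 h3
    linarith
  | zero => rfl
  | add x y _ _ hx hy => rw [AddMonoidAlgebra.coeff_add, Finsupp.add_apply, hx, hy, add_zero]
  | smul c x _ hx => rw [AddMonoidAlgebra.coeff_smul_apply, hx, smul_zero]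

/-- Unitriangularity implies bijectivity onto invariants. -/
theorem aux_triangular {P : Type*} [AddCommMonoid P] {B : X →ₗ[ℤ] X →ₗ[ℤ] ℤ}
    (hsymm : ∀ x y, B x y = B y x)
    (hpd : ∀ x, x ≠ 0 → 0 < B x x) {F : Set X}
    (huniq : ∀ δ ∈ F, ∀ w : W, w • δ ∈ F → w • δ = δ)
    (hcov : ∀ x, ∃ w : W, w • x ∈ F)
    (wt : P → X) (hwt : Function.Injective wt) (hwtF : ∀ p, wt p ∈ F)
    (hsurj : ∀ δ ∈ F, ∃ p, wt p = δ)
    (Φ : AddMonoidAlgebra ℤ P →+* AddMonoidAlgebra ℤ X)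
    (hΦ : ∀ p, Φ (AddMonoidAlgebra.single p 1) - orbitSum W (wt p) ∈ auxLow W B F (wt p)) :
    Function.Injective Φ ∧ Φ.range = invSubring W X := by
  classical
  have hexp : ∀ f : AddMonoidAlgebra ℤ P,
      Φ f = ∑ p ∈ f.coeff.support, f.coeff p • Φ (AddMonoidAlgebra.single p 1) := by
    intro f
    conv_lhs => rw [← AddMonoidAlgebra.sum_coeff_single f, Finsupp.sum, map_sum]
    refine Finset.sum_congr rfl fun p _ => ?_
    rw [← map_zsmul, AddMonoidAlgebra.smul_single, smul_eq_mul, mul_one]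
  have hlowinv : ∀ δ, ∀ f ∈ auxLow W B F δ, f ∈ invSubring W X := by
    intro δ f hf
    induction hf using Submodule.span_induction with
    | mem x hx => obtain ⟨ε, _, rfl⟩ := hx; exact aux_orbit_inv ε
    | zero => exact zero_mem _
    | add x y _ _ hx hy => exact add_mem hx hy
    | smul c x _ hx => exact zsmul_mem hx c
  constructor
  · rw [injective_iff_map_eq_zero]
    intro f hf
    by_contra hne
    have hsne : f.coeff.support.Nonempty := by
      rw [Finsupp.support_nonempty_iff]
      simpa using hne
    obtain ⟨p, hp, hmax⟩ := Finset.exists_max_image f.coeff.support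
      (fun p => B (wt p) (wt p)) hsne
    have h0 : (Φ f).coeff (wt p) = f.coeff p := by
      rw [hexp, AddMonoidAlgebra.coeff_sum, Finsupp.finsetSum_apply]
      have : ∀ q ∈ f.coeff.support,
          (f.coeff q • Φ (AddMonoidAlgebra.single q 1)).coeff (wt p)
            = if q = p then f.coeff q else 0 := by
        intro q hq
        have h1 := aux_low_coeff hsymm hpd huniq (hwtF q) (hwtF p) (hmax q hq) (hΦ q)
        rw [AddMonoidAlgebra.coeff_sub, Finsupp.sub_apply, sub_eq_zero,
          aux_coeff_F huniq (hwtF q) (hwtF p)] at h1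
        rw [AddMonoidAlgebra.coeff_smul_apply, h1]
        simp [hwt.eq_iff]
      rw [Finset.sum_congr rfl this, Finset.sum_ite_eq', if_pos hp]
    rw [hf] at h0
    exact Finsupp.mem_support_iff.1 hp h0.symm
  · apply le_antisymm
    · rintro _ ⟨f, rfl⟩
      rw [hexp]
      refine sum_mem fun p _ => zsmul_mem ?_ _
      have := add_mem (hlowinv _ _ (hΦ p)) (aux_orbit_inv (W := W) (wt p))
      rwa [sub_add_cancel] at this
    · have hS : ∀ (n : ℕ), ∀ δ ∈ F, (B δ δ).toNat = n → orbitSum W δ ∈ Φ.range := by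
        intro n
        induction n using Nat.strong_induction_on with
        | _ n ih =>
          intro δ hδ hn
          obtain ⟨p, rfl⟩ := hsurj δ hδ
          have hlow : ∀ f ∈ auxLow W B F (wt p), f ∈ Φ.range := by
            intro f hf
            induction hf using Submodule.span_induction with
            | mem x hx =>
              obtain ⟨ε, ⟨h1, h2, h3⟩, rfl⟩ := hx
              refine ih _ ?_ ε h1 rfl
              have hlt := aux_dom_lt hsymm hpd h1 hδ h2 h3
              have hnn : 0 ≤ B ε ε := by
                by_cases h : ε = 0
                · simp [h]
                · exact (hpd ε h).le
              omega
            | zero => exact zero_mem _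
            | add x y _ _ hx hy => exact add_mem hx hy
            | smul c x _ hx => exact zsmul_mem hx c
          have h1 : Φ (AddMonoidAlgebra.single p 1) ∈ Φ.range := ⟨_, rfl⟩
          have := sub_mem h1 (hlow _ (hΦ p))
          rwa [sub_sub_cancel] at this
      intro f hf
      have key : ∀ g ∈ Submodule.span ℤ (orbitSum W '' {ε | ε ∈ F ∧ f.coeff ε ≠ 0}),
          g ∈ Φ.range := by
        intro g hg
        induction hg using Submodule.span_induction with
        | mem x hx => obtain ⟨ε, h, rfl⟩ := hx; exact hS _ ε h.1 rfl
        | zero => exact zero_mem _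
        | add x y _ _ hx hy => exact add_mem hx hy
        | smul c x _ hx => exact zsmul_mem hx c
      exact key f (aux_span huniq hcov f hf)

end aux

/-- Let `X` be a free abelian group with an action of a finite group `W`,
`ξ₁,…,ξ_l ∈ X` fixed by `W`, `ω₁,…,ω_r ∈ X`, and `F ⊆ X` a set meeting every `W`-orbit in
exactly one point in which every element is uniquely of the form `Σ aᵢξᵢ + Σ bⱼωⱼ`
(`aᵢ ∈ ℤ`, `bⱼ ∈ ℕ`), and conversely.  Given a partial order on `F` such that each element
dominates only finitely many others and
`S(δ)·S(δ') = S(δ+δ') + (lower order terms)`, the ring homomorphism `Φ` from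
`ℤ[x₁^{±1},…,x_l^{±1}] ⊗ ℤ[w₁,…,w_r]` (realized as the monomial algebra on
`ℤ^l × ℕ^r`) determined by `Φ(xᵢ) = e^{ξᵢ}`, `Φ(wⱼ) = S(ωⱼ)` is an isomorphism onto
`ℤ[X]^W`. -/
theorem statement16
    {X W : Type*} [AddCommGroup X] [DecidableEq X] [Module.Free ℤ X]
    [Group W] [Fintype W] [DistribMulAction W X]
    {l r : ℕ} (ξ : Fin l → X) (ω : Fin r → X)
    (hξ : ∀ (w : W) (i : Fin l), w • ξ i = ξ i)
    (F : Set X)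
    (horbit : ∀ δ : X, ∃! γ : X, γ ∈ F ∧ γ ∈ MulAction.orbit W δ)
    (hrep : ∀ δ ∈ F, ∃! p : (Fin l → ℤ) × (Fin r → ℕ),
        δ = (∑ i, p.1 i • ξ i) + ∑ j, (p.2 j : ℤ) • ω j)
    (hrep' : ∀ p : (Fin l → ℤ) × (Fin r → ℕ),
        ((∑ i, p.1 i • ξ i) + ∑ j, (p.2 j : ℤ) • ω j) ∈ F)
    (le : X → X → Prop)
    (hrefl : ∀ δ ∈ F, le δ δ)
    (htrans : ∀ δ ∈ F, ∀ ε ∈ F, ∀ η ∈ F, le δ ε → le ε η → le δ η)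
    (hantisymm : ∀ δ ∈ F, ∀ ε ∈ F, le δ ε → le ε δ → δ = ε)
    (hfin : ∀ δ ∈ F, {ε : X | ε ∈ F ∧ le ε δ ∧ ε ≠ δ}.Finite)
    (hmul : ∀ δ ∈ F, ∀ δ' ∈ F, ∃ (T : Finset X) (a : X → ℤ),
        (∀ ε ∈ T, ε ∈ F ∧ le ε (δ + δ') ∧ ε ≠ δ + δ') ∧
        orbitSum W δ * orbitSum W δ'
          = orbitSum W (δ + δ') + ∑ ε ∈ T, a ε • orbitSum W ε) :
    ∃ Φ : AddMonoidAlgebra ℤ ((Fin l → ℤ) × (Fin r → ℕ)) →+* AddMonoidAlgebra ℤ X,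
      (∀ p : (Fin l → ℤ) × (Fin r → ℕ),
        Φ (AddMonoidAlgebra.single p 1)
          = AddMonoidAlgebra.single (∑ i, p.1 i • ξ i) 1 * ∏ j, orbitSum W (ω j) ^ p.2 j) ∧
      Function.Injective Φ ∧ Φ.range = invSubring W X := by
  classical
  obtain ⟨B, hsymm, hinv, hpd⟩ := aux_exists_form X W
  let wt : ((Fin l → ℤ) × (Fin r → ℤ)) →ₗ[ℤ] X :=
    LinearMap.coprod (Fintype.linearCombination ℤ ξ) (Fintype.linearCombination ℤ ω)
  have hwt : ∀ p, wt p = (∑ i, p.1 i • ξ i) + ∑ j, p.2 j • ω j := fun p => by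
    simp [wt, Fintype.linearCombination_apply]
  let wtN : ((Fin l → ℤ) × (Fin r → ℕ)) → X := fun p =>
    (∑ i, p.1 i • ξ i) + ∑ j, (p.2 j : ℤ) • ω j
  have hwtN : ∀ p, wtN p = wt (p.1, fun j => (p.2 j : ℤ)) := fun p => by rw [hwt]
  have hNF : ∀ p, wtN p ∈ F := hrep'
  have hNinj : Function.Injective wtN := fun p q h =>
    (hrep (wtN p) (hNF p)).unique rfl h
  have hNsurj : ∀ δ ∈ F, ∃ p, wtN p = δ := fun δ hδ => by
    obtain ⟨p, hp, _⟩ := hrep δ hδ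
    exact ⟨p, hp.symm⟩
  have hinj : Function.Injective wt := by
    rw [injective_iff_map_eq_zero]
    intro p hp
    have h1 : wtN (p.1, fun j => (p.2 j).toNat) = wtN (0, fun j => (-(p.2 j)).toNat) := by
      rw [hwtN, hwtN, ← sub_eq_zero, ← map_sub, ← hp]
      congr 1
      ext j
      · simp
      · simp only [Prod.snd_sub, Pi.sub_apply]
        omega
    have h2 := hNinj h1
    rw [Prod.mk.injEq] at h2
    ext j
    · rw [h2.1]; rfl
    · have := congrFun h2.2 j
      simp only [Prod.snd_zero, Pi.zero_apply]
      omega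
  have hF : ∀ δ, δ ∈ F ↔ ∃ p, (∀ j, 0 ≤ p.2 j) ∧ wt p = δ := by
    intro δ
    constructor
    · intro h
      obtain ⟨p, rfl⟩ := hNsurj δ h
      exact ⟨_, fun j => Int.natCast_nonneg _, (hwtN p).symm⟩
    · rintro ⟨p, hp, rfl⟩
      have := hNF (p.1, fun j => (p.2 j).toNat)
      rw [hwtN] at this
      convert this using 2
      ext j
      · rfl
      · simp [hp j]
  have huniq : ∀ δ ∈ F, ∀ w : W, w • δ ∈ F → w • δ = δ := by
    intro δ hδ w hw
    exact (horbit δ).unique ⟨hw, w, rfl⟩ ⟨hδ, MulAction.mem_orbit_self δ⟩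
  have hcov : ∀ x, ∃ w : W, w • x ∈ F := by
    intro x
    obtain ⟨γ, ⟨h1, w, rfl⟩, _⟩ := horbit x
    exact ⟨w, h1⟩
  have hadd : ∀ a ∈ F, ∀ b ∈ F, a + b ∈ F := by
    intro a ha b hb
    obtain ⟨p, hp, rfl⟩ := (hF a).1 ha
    obtain ⟨q, hq, rfl⟩ := (hF b).1 hb
    exact (hF _).2 ⟨p + q, fun j => add_nonneg (hp j) (hq j), map_add _ _ _⟩
  have hmax := aux_max wt hinj F hF huniq hcov B hsymm hinv hpd
  have hS : ∀ a ∈ F, ∀ b ∈ F,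
      orbitSum W a * orbitSum W b - orbitSum W (a + b) ∈ auxLow W B F (a + b) := by
    intro a ha b hb
    have hab := hadd a ha b hb
    set f := orbitSum W a * orbitSum W b - orbitSum W (a + b) with hf
    have hfi : f ∈ invSubring W X :=
      sub_mem (mul_mem (aux_orbit_inv a) (aux_orbit_inv b)) (aux_orbit_inv _)
    have h0 : f.coeff (a + b) = 0 := by
      obtain ⟨T, c, hT, e⟩ := hmul a ha b hb
      rw [hf, e, add_sub_cancel_left, AddMonoidAlgebra.coeff_sum, Finsupp.finsetSum_apply]
      refine Finset.sum_eq_zero fun ε hε => ?_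
      rw [AddMonoidAlgebra.coeff_smul_apply, aux_coeff_F huniq (hT ε hε).1 hab,
        if_neg (hT ε hε).2.2, smul_zero]
    refine Submodule.span_mono (Set.image_mono ?_) (aux_span huniq hcov f hfi)
    rintro ε ⟨hε, hne⟩
    have hεne : ε ≠ a + b := fun h => hne (h ▸ h0)
    refine ⟨hε, ?_, hεne⟩
    have h1 : (orbitSum W a * orbitSum W b).coeff ε ≠ 0 := by
      rw [hf, AddMonoidAlgebra.coeff_sub, Finsupp.sub_apply, aux_coeff_F huniq hab hε,
        if_neg hεne.symm, sub_zero] at hne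
      exact hne
    obtain ⟨u, v, rfl⟩ := aux_coeff_mul h1
    intro x hx
    have h2 := hmax x hx a ha u
    have h3 := hmax x hx b hb v
    rw [hsymm _ x, hsymm _ x, map_add, map_add]
    exact add_le_add h2 h3
  let g : Multiplicative ((Fin l → ℤ) × (Fin r → ℕ)) →* AddMonoidAlgebra ℤ X :=
    { toFun := fun p => AddMonoidAlgebra.single (∑ i, p.toAdd.1 i • ξ i) 1
        * ∏ j, orbitSum W (ω j) ^ p.toAdd.2 j
      map_one' := by
        simp [AddMonoidAlgebra.one_def]
      map_mul' := by
        intro p q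
        simp only [toAdd_mul, Prod.fst_add, Prod.snd_add, Pi.add_apply, add_smul, pow_add,
          Finset.sum_add_distrib, Finset.prod_mul_distrib]
        rw [show (1 : ℤ) = 1 * 1 from rfl, ← AddMonoidAlgebra.single_mul_single, mul_one]
        ring }
  let Φ : AddMonoidAlgebra ℤ ((Fin l → ℤ) × (Fin r → ℕ)) →+* AddMonoidAlgebra ℤ X :=
    AddMonoidAlgebra.liftNCRingHom (Int.castRingHom _) g (fun _ _ => Commute.all _ _)
  have hΦ : ∀ p : (Fin l → ℤ) × (Fin r → ℕ),
        Φ (AddMonoidAlgebra.single p 1)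
          = AddMonoidAlgebra.single (∑ i, p.1 i • ξ i) 1 * ∏ j, orbitSum W (ω j) ^ p.2 j := by
    intro p
    simp only [Φ, AddMonoidAlgebra.liftNCRingHom_single, map_one, one_mul]
    rfl
  have hlead : ∀ p, Φ (AddMonoidAlgebra.single p 1) - orbitSum W (wtN p)
      ∈ auxLow W B F (wtN p) := by
    have hwadd : ∀ p q, wtN (p + q) = wtN p + wtN q := by
      intro p q
      rw [hwtN, hwtN, hwtN, ← map_add]
      congr 1
    have hfix : ∀ a : Fin l → ℤ, Φ (AddMonoidAlgebra.single (a, 0) 1)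
        = orbitSum W (wtN (a, 0)) := by
      intro a
      rw [hΦ]
      have hw : ∀ w : W, w • (∑ i, a i • ξ i) = ∑ i, a i • ξ i := by
        intro w
        rw [Finset.smul_sum]
        refine Finset.sum_congr rfl fun i _ => ?_
        rw [smul_comm, hξ]
      have e : wtN (a, 0) = ∑ i, a i • ξ i := by simp [wtN]
      rw [e]
      ext x
      rw [aux_coeff_orbit]
      simp [hw, Finsupp.single_apply]
    let M : AddSubmonoid ((Fin l → ℤ) × (Fin r → ℕ)) :=
      { carrier := {p | Φ (AddMonoidAlgebra.single p 1) - orbitSum W (wtN p)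
          ∈ auxLow W B F (wtN p)}
        zero_mem' := by
          have := hfix 0
          change Φ (AddMonoidAlgebra.single (0, 0) 1) - orbitSum W (wtN (0, 0)) ∈
            auxLow W B F (wtN (0, 0))
          rw [this, sub_self]
          exact zero_mem _
        add_mem' := by
          intro p q hp hq
          change Φ (AddMonoidAlgebra.single (p + q) 1) - orbitSum W (wtN (p + q))
            ∈ auxLow W B F (wtN (p + q))
          have := aux_lead_mul hsymm hpd hadd hS (hNF p) (hNF q) hp hq
          rw [← map_mul, AddMonoidAlgebra.single_mul_single, mul_one] at this
          rw [hwadd]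
          exact this }
    have hM1 : ∀ a : Fin l → ℤ, (a, 0) ∈ M := by
      intro a
      change Φ (AddMonoidAlgebra.single (a, 0) 1) - orbitSum W (wtN (a, 0)) ∈
        auxLow W B F (wtN (a, 0))
      rw [hfix, sub_self]
      exact zero_mem _
    have hM2 : ∀ j : Fin r, ((0, Pi.single j 1) : (Fin l → ℤ) × (Fin r → ℕ)) ∈ M := by
      intro j
      change Φ (AddMonoidAlgebra.single (0, Pi.single j 1) 1)
        - orbitSum W (wtN (0, Pi.single j 1)) ∈ auxLow W B F (wtN (0, Pi.single j 1))
      have e : wtN (0, Pi.single j 1) = ω j := by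
        simp only [wtN]
        rw [Finset.sum_eq_zero (fun i _ => by simp), zero_add,
          Finset.sum_eq_single j (fun k _ hk => by simp [hk]) (by simp)]
        simp
      have e2 : Φ (AddMonoidAlgebra.single (0, Pi.single j 1) 1) = orbitSum W (ω j) := by
        rw [hΦ, Finset.prod_eq_single j (fun k _ hk => by simp [hk]) (by simp)]
        simp [← AddMonoidAlgebra.one_def]
      rw [e, e2, sub_self]
      exact zero_mem _
    intro p
    have hp : p = (p.1, 0) + ∑ j, p.2 j • ((0, Pi.single j 1) : (Fin l → ℤ) × (Fin r → ℕ)) := by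
      ext k
      · simp [Prod.fst_sum]
      · simp [Prod.snd_sum, Finset.sum_apply, Pi.single_apply]
    have : p ∈ M := by
      rw [hp]
      exact add_mem (hM1 _) (sum_mem fun j _ => nsmul_mem (hM2 j) _)
    exact this
  exact ⟨Φ, hΦ, aux_triangular hsymm hpd huniq hcov wtN hNinj hNF hNsurj Φ hlead⟩
end
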